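/- Let H be a Hopf algebra over a field k, suppose r ∈ H satisfies the 1-dimensional partial comodule equations, and let g ∈ H be a grouplike element, i.e. Δ(g) = g ⊗ g and ε(g) = 1. Then the element g·r also satisfies the 1-dimensional partial comodule equations. -/

import Mathlib

/-!
Since `Δ` is multiplicative with `Δ g = g ⊗ g`, and `S` is antimultiplicative, replacing `r` by
`g * r` multiplies both sides of each of the four tensor identities by the same simple tensors in
`g`, `S g` and `1`. In the two identities containing `S(r)·r` the factor `S g` disappears,
because it meets a factor `g` and `S g * g = 1`.
-/

open TensorProduct

/-- The five 1-dimensional partial comodule equations for an element `r` of a Hopf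
algebra `H`: `ε(r) = 1`; `r ⊗ r·S(r) = r₍₁₎ ⊗ r₍₂₎·S(r)`; `r·S(r₍₁₎) ⊗ r₍₂₎ = r·S(r) ⊗ r`;
`r ⊗ S(r)·r = r₍₁₎ ⊗ S(r₍₂₎)·r`; `S(r)·r ⊗ r = S(r)·r₍₁₎ ⊗ r₍₂₎`. -/
def OneDimPCM (k : Type*) {H : Type*} [Field k] [Ring H] [HopfAlgebra k H] (r : H) : Prop :=
  Coalgebra.counit (R := k) r = 1
  ∧ r ⊗ₜ[k] (r * HopfAlgebra.antipode (R := k) r)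
      = Coalgebra.comul (R := k) r * ((1 : H) ⊗ₜ[k] HopfAlgebra.antipode (R := k) r)
  ∧ (r ⊗ₜ[k] (1 : H)) *
        (LinearMap.rTensor H (HopfAlgebra.antipode (R := k)) (Coalgebra.comul (R := k) r))
      = (r * HopfAlgebra.antipode (R := k) r) ⊗ₜ[k] r
  ∧ r ⊗ₜ[k] (HopfAlgebra.antipode (R := k) r * r)
      = (LinearMap.lTensor H (HopfAlgebra.antipode (R := k)) (Coalgebra.comul (R := k) r))
          * ((1 : H) ⊗ₜ[k] r)
  ∧ (HopfAlgebra.antipode (R := k) r * r) ⊗ₜ[k] r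
      = ((HopfAlgebra.antipode (R := k) r) ⊗ₜ[k] (1 : H)) * Coalgebra.comul (R := k) r

section HopfAlgebra

open Coalgebra HopfAlgebra

variable {R A : Type*} [CommSemiring R] [Semiring A] [HopfAlgebra R A]

lemma rTensor_antipode_tmul_mul (a b : A) (x : A ⊗[R] A) :
    (antipode R).rTensor A ((a ⊗ₜ[R] b) * x)
      = (1 ⊗ₜ[R] b) * (antipode R).rTensor A x * (antipode R a ⊗ₜ[R] 1) := by
  induction x with
  | zero => simp
  | tmul c d => simp [antipode_mul_antidistrib]
  | add x y hx hy => simp only [mul_add, map_add, add_mul, hx, hy]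

lemma lTensor_antipode_tmul_mul (a b : A) (x : A ⊗[R] A) :
    (antipode R).lTensor A ((a ⊗ₜ[R] b) * x)
      = (a ⊗ₜ[R] 1) * (antipode R).lTensor A x * (1 ⊗ₜ[R] antipode R b) := by
  induction x with
  | zero => simp
  | tmul c d => simp [antipode_mul_antidistrib]
  | add x y hx hy => simp only [mul_add, map_add, add_mul, hx, hy]

lemma antipode_mul_mul_mul_cancel {g : A} (hg : IsGroupLikeElem R g) (a b : A) :
    antipode R (g * a) * (g * b) = antipode R a * b := by
  rw [antipode_mul_antidistrib, mul_assoc, ← mul_assoc (antipode R g),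
    hg.antipode_mul_cancel, one_mul]

lemma comul_mul_of_comul_eq_tmul_self {g : A} (hg : comul g = g ⊗ₜ[R] g) (a : A) :
    comul (R := R) (g * a) = (g ⊗ₜ[R] g) * comul a := by
  rw [Bialgebra.comul_mul, hg]

lemma comul_mul_mul_one_tmul_antipode {g : A} (hg : comul g = g ⊗ₜ[R] g) (a b : A) :
    comul (g * a) * (1 ⊗ₜ[R] antipode R (g * b))
      = (g ⊗ₜ[R] g) * (comul a * (1 ⊗ₜ[R] antipode R b)) * (1 ⊗ₜ[R] antipode R g) := by
  simp only [comul_mul_of_comul_eq_tmul_self hg, antipode_mul_antidistrib, mul_assoc,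
    Algebra.TensorProduct.tmul_mul_tmul, mul_one]

lemma tmul_one_mul_rTensor_antipode_comul_mul {g : A} (hg : comul g = g ⊗ₜ[R] g) (a b : A) :
    ((g * a) ⊗ₜ[R] 1) * (antipode R).rTensor A (comul (g * b))
      = (g ⊗ₜ[R] g) * ((a ⊗ₜ[R] 1) * (antipode R).rTensor A (comul b))
        * (antipode R g ⊗ₜ[R] 1) := by
  simp only [comul_mul_of_comul_eq_tmul_self hg, rTensor_antipode_tmul_mul, ← mul_assoc,
    Algebra.TensorProduct.tmul_mul_tmul, mul_one, one_mul]

lemma lTensor_antipode_comul_mul_mul_one_tmul {g : A} (hg : IsGroupLikeElem R g) (a b : A) :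
    (antipode R).lTensor A (comul (g * a)) * (1 ⊗ₜ[R] (g * b))
      = (g ⊗ₜ[R] 1) * ((antipode R).lTensor A (comul a) * (1 ⊗ₜ[R] b)) := by
  have cancel : antipode R g * (g * b) = b := by
    simpa using antipode_mul_mul_mul_cancel hg 1 b
  rw [comul_mul_of_comul_eq_tmul_self hg.comul_eq_tmul_self, lTensor_antipode_tmul_mul,
    mul_assoc, mul_assoc, Algebra.TensorProduct.tmul_mul_tmul, cancel, one_mul]

lemma antipode_tmul_one_mul_comul_mul {g : A} (hg : IsGroupLikeElem R g) (a b : A) :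
    (antipode R (g * a) ⊗ₜ[R] 1) * comul (g * b)
      = (1 ⊗ₜ[R] g) * ((antipode R a ⊗ₜ[R] 1) * comul b) := by
  have cancel : antipode R (g * a) * g = antipode R a := by
    simpa using antipode_mul_mul_mul_cancel hg a 1
  rw [comul_mul_of_comul_eq_tmul_self hg.comul_eq_tmul_self, ← mul_assoc, ← mul_assoc]
  simp only [Algebra.TensorProduct.tmul_mul_tmul, cancel, one_mul, mul_one]

end HopfAlgebra

/-- if `r ∈ H` satisfies the 1-dimensional partial comodule equations and
`g ∈ H` is grouplike (`Δ(g) = g ⊗ g`, `ε(g) = 1`), then `g·r` also satisfies them. -/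
theorem stmt9 (k H : Type*) [Field k] [Ring H] [HopfAlgebra k H]
    (r : H) (hr : OneDimPCM k r)
    (g : H) (hg1 : Coalgebra.comul (R := k) g = g ⊗ₜ[k] g)
    (hg2 : Coalgebra.counit (R := k) g = 1) :
    OneDimPCM k (g * r) := by
  have hg : IsGroupLikeElem k g := ⟨hg2, hg1⟩
  obtain ⟨counit_r, comul_mul_S, mul_S_comul, S_comul_mul, S_mul_comul⟩ := hr
  refine ⟨?_, ?_, ?_, ?_, ?_⟩
  · rw [Bialgebra.counit_mul, hg2, counit_r, one_mul]
  · rw [comul_mul_mul_one_tmul_antipode hg1, ← comul_mul_S]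
    simp only [HopfAlgebra.antipode_mul_antidistrib, Algebra.TensorProduct.tmul_mul_tmul,
      mul_assoc, mul_one]
  · rw [tmul_one_mul_rTensor_antipode_comul_mul hg1, mul_S_comul]
    simp only [HopfAlgebra.antipode_mul_antidistrib, Algebra.TensorProduct.tmul_mul_tmul,
      mul_assoc, mul_one]
  · rw [lTensor_antipode_comul_mul_mul_one_tmul hg, ← S_comul_mul, antipode_mul_mul_mul_cancel hg,
      Algebra.TensorProduct.tmul_mul_tmul, one_mul]
  · rw [antipode_tmul_one_mul_comul_mul hg, ← S_mul_comul, antipode_mul_mul_mul_cancel hg,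
      Algebra.TensorProduct.tmul_mul_tmul, one_mul]
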